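/- Probabilistic simulation is a precongruence for Kleene star: for probabilistic automata P and Q, if P ≤ Q then P* ≤ Q*. -/

import Mathlib

open scoped ENNReal

namespace PCKA

/-- A probabilistic automaton over the (non-silent) action alphabet `α`, with state
space `σ`.  Transition labels are `Option α`, where `none` plays the role of the
silent action `τ`; `trans x a μ` means `x —a→ μ` where `μ` is a (countably
supported) probability distribution over states, `init` is the initial
distribution and `final` the set of final states. -/
structure PAut (α : Type) (σ : Type) where
  trans : σ → Option α → PMF σ → Prop
  init : PMF σ
  final : Set σ

/-- The lifting `S̄ ⊆ D(X) × D(Y)` of a relation `S ⊆ X × D(Y)`: `μ S̄ ν` iff there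
are weights `p n` summing to `1`, states `x n` and distributions `νs n` with
`μ = Σ_n p n · δ_{x n}`, `x n S νs n` for each `n`, and `ν = Σ_n p n · νs n`. -/
def Lift {X Y : Type} (S : X → PMF Y → Prop) (μ : PMF X) (ν : PMF Y) : Prop :=
  ∃ (p : ℕ → ℝ≥0∞) (x : ℕ → X) (νs : ℕ → PMF Y),
    (∑' n, p n) = 1 ∧
    (∀ s, μ s = ∑' n, p n * (PMF.pure (x n)) s) ∧
    (∀ n, S (x n) (νs n)) ∧
    (∀ t, ν t = ∑' n, p n * (νs n) t)

/-- The double lifting `T̿ ⊆ D(X) × D(Z)` of a relation `T ⊆ X × Z`, via a weight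
function `w`. -/
def DLift {X Z : Type} (T : X → Z → Prop) (μ : PMF X) (ψ : PMF Z) : Prop :=
  ∃ w : X → Z → ℝ≥0∞,
    (∀ x z, 0 < w x z → T x z) ∧
    (∀ x, (∑' z, w x z) = μ x) ∧
    (∀ z, (∑' x, w x z) = ψ z)

/-- Flattening `π : D(D(Y)) → D(Y)`, `π(ψ) = Σ_{ν} ψ(ν)·ν`. -/
noncomputable def flat {Y : Type} (ψ : PMF (PMF Y)) : PMF Y := ψ.bind id

/-- Single transition step, with the τ-transitions extended by reflexivity
(`x —τ→ δ_x` is always allowed). -/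
def step {α σ : Type} (P : PAut α σ) (a : Option α) (x : σ) (μ : PMF σ) : Prop :=
  P.trans x a μ ∨ (a = none ∧ μ = PMF.pure x)

/-- Weak internal moves `⇒`: the reflexive-transitive closure of the lifted
(extended) τ-transition relation on distributions. -/
def WeakTau {α σ : Type} (P : PAut α σ) : PMF σ → PMF σ → Prop :=
  Relation.ReflTransGen (Lift (step P none))

/-- Weak `a`-transition `μ ⇒^a μ'`: `μ ⇒ μ₁ —ā→ μ₂ ⇒ μ'`. -/
def WeakStep {α σ : Type} (P : PAut α σ) (a : Option α) (μ μ' : PMF σ) : Prop :=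
  ∃ μ₁ μ₂, WeakTau P μ μ₁ ∧ Lift (step P a) μ₁ μ₂ ∧ WeakTau P μ₂ μ'

/-- A probabilistic simulation from `P` to `Q` (Deng et al. style). -/
structure IsSimulation {α σ τ' : Type} (P : PAut α σ) (Q : PAut α τ')
    (S : σ → PMF τ' → Prop) : Prop where
  init : ∃ ν₀', WeakTau Q Q.init ν₀' ∧ Lift S P.init ν₀'
  step : ∀ x a μ', P.trans x a μ' → ∀ ν, S x ν →
    ∃ ν', WeakStep Q a ν ν' ∧ Lift S μ' ν'
  final : ∀ x ν, x ∈ P.final → S x ν →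
    ∃ ν', WeakTau Q ν ν' ∧ ∀ y ∈ ν'.support, y ∈ Q.final

/-- A probabilistic weak forward simulation from `P` to `Q` (Segala style). -/
structure IsWFSimulation {α σ τ' : Type} (P : PAut α σ) (Q : PAut α τ')
    (S : σ → PMF τ' → Prop) : Prop where
  init : ∃ ψ₀ : PMF (PMF τ'), DLift S P.init ψ₀ ∧ WeakTau Q Q.init (flat ψ₀)
  step : ∀ x a μ', P.trans x a μ' → ∀ ν, S x ν →
    ∃ ψ : PMF (PMF τ'), WeakStep Q a ν (flat ψ) ∧ DLift S μ' ψ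
  final : ∀ x ν, x ∈ P.final → S x ν →
    ∃ ψ : PMF (PMF τ'), (∀ ρ ∈ ψ.support, ∀ y ∈ ρ.support, y ∈ Q.final) ∧
      WeakTau Q ν (flat ψ)

/-- `P ≤ Q`: there exists a probabilistic simulation from `P` to `Q`. -/
def Sim {α σ τ' : Type} (P : PAut α σ) (Q : PAut α τ') : Prop :=
  ∃ S, IsSimulation P Q S

/-- Simulation equivalence `P ≡ Q`. -/
def SimEquiv {α σ τ' : Type} (P : PAut α σ) (Q : PAut α τ') : Prop :=
  Sim P Q ∧ Sim Q P

/-- Convex combination `p·μ + (1−p)·ν` of two distributions. -/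
noncomputable def mix {X : Type} (p : ℝ≥0∞) (hp : p ≤ 1) (μ ν : PMF X) : PMF X :=
  ⟨fun x => p * μ x + (1 - p) * ν x, by
    refine ENNReal.summable.hasSum_iff.mpr ?_
    rw [ENNReal.tsum_add, ENNReal.tsum_mul_left, ENNReal.tsum_mul_left,
      μ.tsum_coe, ν.tsum_coe, mul_one, mul_one, add_tsub_cancel_of_le hp]⟩

/-- Product distribution `μ × ν`, with `(μ × ν)(x,y) = μ(x)·ν(y)`. -/
noncomputable def pprod {X Y : Type} (μ : PMF X) (ν : PMF Y) : PMF (X × Y) :=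
  μ.bind fun x => ν.map fun y => (x, y)

/-- The skip automaton `1`: one state, no transitions, that state is final. -/
noncomputable def skip (α : Type) : PAut α Unit :=
  ⟨fun _ _ _ => False, PMF.pure (), Set.univ⟩

/-- The deadlock automaton `0`: one state, no transitions, no final state. -/
noncomputable def deadlock (α : Type) : PAut α Unit :=
  ⟨fun _ _ _ => False, PMF.pure (), ∅⟩

/-- Nondeterministic choice `P + Q`: disjoint union of the two automata (realised
by the sum type) plus a fresh initial state `z = none` with `z —τ→ μ₀` and
`z —τ→ ν₀`. -/
noncomputable def nchoice {α σ τ' : Type} (P : PAut α σ) (Q : PAut α τ') :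
    PAut α (Option (σ ⊕ τ')) where
  trans := fun s a μ =>
    match s with
    | none => a = none ∧
        (μ = P.init.map (fun x => some (Sum.inl x)) ∨
         μ = Q.init.map (fun y => some (Sum.inr y)))
    | some (Sum.inl x) => ∃ μ', P.trans x a μ' ∧ μ = μ'.map (fun x => some (Sum.inl x))
    | some (Sum.inr y) => ∃ ν', Q.trans y a ν' ∧ μ = ν'.map (fun y => some (Sum.inr y))
  init := PMF.pure none
  final := {s | (∃ x ∈ P.final, s = some (Sum.inl x)) ∨ (∃ y ∈ Q.final, s = some (Sum.inr y))}

/-- Sequential composition `P · Q`: disjoint union (realised by the sum type),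
with a τ-transition from each final state of `P` to the initial distribution of
`Q`; initial distribution that of `P`, final states those of `Q`. -/
noncomputable def pseq {α σ τ' : Type} (P : PAut α σ) (Q : PAut α τ') :
    PAut α (σ ⊕ τ') where
  trans := fun s a μ =>
    match s with
    | Sum.inl x =>
        (∃ μ', P.trans x a μ' ∧ μ = μ'.map Sum.inl) ∨
        (a = none ∧ x ∈ P.final ∧ μ = Q.init.map Sum.inr)
    | Sum.inr y => ∃ ν', Q.trans y a ν' ∧ μ = ν'.map Sum.inr
  init := P.init.map Sum.inl
  final := {s | ∃ y ∈ Q.final, s = Sum.inr y}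

/-- Kleene star `P*`: a fresh state `z = none` which is initial and the only
final state, with `z —τ→ μ₀` and `x —τ→ δ_z` for each final state `x` of `P`. -/
noncomputable def pstar {α σ : Type} (P : PAut α σ) : PAut α (Option σ) where
  trans := fun s a μ =>
    match s with
    | none => a = none ∧ μ = P.init.map some
    | some x =>
        (∃ μ', P.trans x a μ' ∧ μ = μ'.map some) ∨
        (a = none ∧ x ∈ P.final ∧ μ = PMF.pure none)
  init := PMF.pure none
  final := {none}

/-- Probabilistic choice `P ⊕_p Q`: disjoint union with initial distribution
`p·μ₀ + (1−p)·ν₀`. -/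
noncomputable def pchoice {α σ τ' : Type} (p : ℝ≥0∞) (hp : p ≤ 1)
    (P : PAut α σ) (Q : PAut α τ') : PAut α (σ ⊕ τ') where
  trans := fun s a μ =>
    match s with
    | Sum.inl x => ∃ μ', P.trans x a μ' ∧ μ = μ'.map Sum.inl
    | Sum.inr y => ∃ ν', Q.trans y a ν' ∧ μ = ν'.map Sum.inr
  init := mix p hp (P.init.map Sum.inl) (Q.init.map Sum.inr)
  final := {s | (∃ x ∈ P.final, s = Sum.inl x) ∨ (∃ y ∈ Q.final, s = Sum.inr y)}

/-- CSP-style parallel composition `P ∥_A Q` synchronising on the frame `A`: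
actions in `A` must be performed jointly, all other actions (including τ) are
interleaved. -/
noncomputable def par {α σ τ' : Type} (A : Set α) (P : PAut α σ) (Q : PAut α τ') :
    PAut α (σ × τ') where
  trans := fun s a μπ => ∃ μ ν, μπ = pprod μ ν ∧
    ((∃ b ∈ A, a = some b ∧ P.trans s.1 a μ ∧ Q.trans s.2 a ν) ∨
     ((∀ b ∈ A, a ≠ some b) ∧ P.trans s.1 a μ ∧ ν = PMF.pure s.2) ∨
     ((∀ b ∈ A, a ≠ some b) ∧ Q.trans s.2 a ν ∧ μ = PMF.pure s.1))
  init := pprod P.init Q.init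
  final := {s | s.1 ∈ P.final ∧ s.2 ∈ Q.final}

/-! The copy of `Q` inside `Q*` can perform every weak move of `Q`, because weak moves are pushed
forward along transition-preserving maps. Hence a simulation of `P` by `Q`, extended by relating
the fresh state of `P*` to the Dirac distribution at the fresh state of `Q*`, simulates `P*` by
`Q*`. Leaving the fresh state is matched using the initial condition of the simulation. Returning
to it from a final state of `P` is matched by a weak move to a distribution supported in the final
states of `Q`, all of which then collapse to the fresh state in a single lifted `τ`-step. -/

section Support

variable {ι κ : Type*}

theorem bind_congr_of_mem_support {p : PMF ι} {f g : ι → PMF κ}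
    (h : ∀ i ∈ p.support, f i = g i) : p.bind f = p.bind g := by
  rw [← PMF.bindOnSupport_eq_bind, ← PMF.bindOnSupport_eq_bind]
  congr 1
  funext i hi
  exact h i hi

theorem exists_nat_map_eq (p : PMF ι) :
    ∃ (q : PMF ℕ) (e : ℕ → ι), (∀ n, e n ∈ p.support) ∧ q.map e = p := by
  obtain ⟨e, he⟩ := p.support_countable.exists_eq_range p.support_nonempty
  have right_inv : ∀ i ∈ p.support, e (Function.invFun e i) = i := fun i hi =>
    Function.invFun_eq (Set.mem_range.mp (he ▸ hi))
  refine ⟨p.map (Function.invFun e), e, fun n => he ▸ Set.mem_range_self n, ?_⟩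
  calc (p.map (Function.invFun e)).map e
      = p.bind fun i => PMF.pure (e (Function.invFun e i)) := PMF.map_comp _ _ _
    _ = p.bind PMF.pure :=
        bind_congr_of_mem_support fun i hi => congrArg PMF.pure (right_inv i hi)
    _ = p := PMF.bind_pure p

end Support

section Lift

variable {X X' Y Y' : Type} {S : X → PMF Y → Prop} {T : X' → PMF Y' → Prop}
  {μ : PMF X} {ν : PMF Y}

theorem lift_iff_exists_map_bind :
    Lift S μ ν ↔ ∃ (p : PMF ℕ) (x : ℕ → X) (νs : ℕ → PMF Y),
      (∀ n, S (x n) (νs n)) ∧ p.map x = μ ∧ p.bind νs = ν := by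
  constructor
  · rintro ⟨p, x, νs, hp, hμ, hS, hν⟩
    exact ⟨⟨p, ENNReal.summable.hasSum_iff.mpr hp⟩, x, νs, hS,
      PMF.ext fun s => (hμ s).symm, PMF.ext fun t => (hν t).symm⟩
  · rintro ⟨p, x, νs, hS, rfl, rfl⟩
    exact ⟨p, x, νs, p.tsum_coe, fun _ => rfl, hS, fun _ => rfl⟩

theorem lift_bind {k : X → PMF Y} (h : ∀ x ∈ μ.support, S x (k x)) : Lift S μ (μ.bind k) := by
  obtain ⟨q, e, he, hq⟩ := exists_nat_map_eq μ
  refine lift_iff_exists_map_bind.mpr ⟨q, e, k ∘ e, fun n => h _ (he n), hq, ?_⟩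
  rw [← PMF.bind_map, hq]

theorem lift_pure {x : X} (h : S x ν) : Lift S (PMF.pure x) ν := by
  have hsupp : ∀ y ∈ (PMF.pure x).support, S y ν := fun y hy =>
    (PMF.mem_support_pure_iff x y).mp hy ▸ h
  simpa only [PMF.bind_const] using lift_bind hsupp

theorem Lift.map (h : Lift S μ ν) (f : X → X') (g : Y → Y')
    (hST : ∀ x ν, S x ν → T (f x) (ν.map g)) : Lift T (μ.map f) (ν.map g) := by
  obtain ⟨p, x, νs, hS, rfl, rfl⟩ := lift_iff_exists_map_bind.mp h
  exact lift_iff_exists_map_bind.mpr ⟨p, f ∘ x, fun n => (νs n).map g,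
    fun n => hST _ _ (hS n), (PMF.map_comp x p f).symm, (PMF.map_bind p νs g).symm⟩

end Lift

section WeakMoves

variable {α σ σ' : Type} {P : PAut α σ} {P' : PAut α σ'} {f : σ → σ'} {a : Option α}
  {μ ν : PMF σ}

theorem weakTau_bind {k : σ → PMF σ} (h : ∀ x ∈ μ.support, P.trans x none (k x)) :
    WeakTau P μ (μ.bind k) :=
  .single (lift_bind fun x hx => .inl (h x hx))

theorem weakTau_pure {x : σ} (h : P.trans x none ν) : WeakTau P (PMF.pure x) ν :=
  .single (lift_pure (.inl h))

theorem WeakTau.weakStep (h : WeakTau P μ ν) : WeakStep P none μ ν := by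
  have refl_step : Lift (step P none) ν ν := by
    simpa only [PMF.bind_pure] using
      lift_bind (μ := ν) (k := PMF.pure) fun _ _ => Or.inr ⟨rfl, rfl⟩
  exact ⟨ν, ν, h, refl_step, .refl⟩

/-- A state map `f` embeds the transitions of `P` into those of `P'`, with target distributions
pushed forward along `f`. Nothing is required of initial distributions and final states, so that
the inclusion of an automaton into a larger one qualifies. -/
def PreservesTrans (f : σ → σ') (P : PAut α σ) (P' : PAut α σ') : Prop :=
  ∀ ⦃x a μ⦄, P.trans x a μ → P'.trans (f x) a (μ.map f)

namespace PreservesTrans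

theorem lift_step (hf : PreservesTrans f P P') (h : Lift (step P a) μ ν) :
    Lift (step P' a) (μ.map f) (ν.map f) := by
  refine h.map f f ?_
  rintro x _ (htrans | ⟨rfl, rfl⟩)
  · exact .inl (hf htrans)
  · exact .inr ⟨rfl, PMF.pure_map f x⟩

theorem weakTau (hf : PreservesTrans f P P') (h : WeakTau P μ ν) :
    WeakTau P' (μ.map f) (ν.map f) :=
  Relation.ReflTransGen.lift (PMF.map f) (fun _ _ => hf.lift_step) _ _ h

theorem weakStep (hf : PreservesTrans f P P') (h : WeakStep P a μ ν) :
    WeakStep P' a (μ.map f) (ν.map f) :=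
  let ⟨_, _, before, move, after⟩ := h
  ⟨_, _, hf.weakTau before, hf.lift_step move, hf.weakTau after⟩

end PreservesTrans

end WeakMoves

section Star

variable {α σ₁ σ₂ : Type} {P : PAut α σ₁} {Q : PAut α σ₂} {S : σ₁ → PMF σ₂ → Prop}

theorem preservesTrans_some_pstar (Q : PAut α σ₂) : PreservesTrans some Q (pstar Q) :=
  fun _ _ μ h => .inl ⟨μ, h, rfl⟩

theorem weakTau_pstar_pure_none_map_init (Q : PAut α σ₂) :
    WeakTau (pstar Q) (PMF.pure none) (Q.init.map some) :=
  weakTau_pure ⟨rfl, rfl⟩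

theorem weakTau_pstar_map_pure_none {ν : PMF σ₂} (h : ∀ y ∈ ν.support, y ∈ Q.final) :
    WeakTau (pstar Q) (ν.map some) (PMF.pure none) := by
  have trans_none : ∀ y ∈ (ν.map some).support, (pstar Q).trans y none (PMF.pure none) := by
    intro y hy
    obtain ⟨x, hx, rfl⟩ := (PMF.mem_support_map_iff some ν y).mp hy
    exact .inr ⟨rfl, h x hx, rfl⟩
  simpa only [PMF.bind_const] using weakTau_bind trans_none

/-- The relation from `P*` to `Q*` induced by a relation `S` from `P` to `Q`: the fresh states
correspond, and `S` is transported along the inclusions of `P` and `Q`. -/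
inductive StarRel (S : σ₁ → PMF σ₂ → Prop) : Option σ₁ → PMF (Option σ₂) → Prop
  | fresh : StarRel S none (PMF.pure none)
  | incl {x : σ₁} {ν : PMF σ₂} (h : S x ν) : StarRel S (some x) (ν.map some)

theorem Lift.starRel {μ : PMF σ₁} {ν : PMF σ₂} (h : Lift S μ ν) :
    Lift (StarRel S) (μ.map some) (ν.map some) :=
  h.map some some fun _ _ => .incl

theorem IsSimulation.starRel (hS : IsSimulation P Q S) :
    IsSimulation (pstar P) (pstar Q) (StarRel S) where
  init := ⟨PMF.pure none, .refl, lift_pure .fresh⟩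
  step := by
    rintro _ a _ htrans _ (_ | @⟨x, ν, hxν⟩)
    · obtain ⟨rfl, rfl⟩ := htrans
      obtain ⟨ν', hν', hlift⟩ := hS.init
      have enter : WeakTau (pstar Q) (PMF.pure none) (ν'.map some) :=
        (weakTau_pstar_pure_none_map_init Q).trans ((preservesTrans_some_pstar Q).weakTau hν')
      exact ⟨ν'.map some, enter.weakStep, hlift.starRel⟩
    · rcases htrans with ⟨μ', htrans, rfl⟩ | ⟨rfl, hfinal, rfl⟩
      · obtain ⟨ν', hν', hlift⟩ := hS.step x a μ' htrans ν hxν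
        exact ⟨ν'.map some, (preservesTrans_some_pstar Q).weakStep hν', hlift.starRel⟩
      · obtain ⟨ν', hν', hsupp⟩ := hS.final x ν hfinal hxν
        have restart : WeakTau (pstar Q) (ν.map some) (PMF.pure none) :=
          ((preservesTrans_some_pstar Q).weakTau hν').trans (weakTau_pstar_map_pure_none hsupp)
        exact ⟨PMF.pure none, restart.weakStep, lift_pure .fresh⟩
  final := by
    rintro _ _ rfl (_ | _)
    exact ⟨PMF.pure none, .refl, fun y => (PMF.mem_support_pure_iff none y).mp⟩

end Star

/-- simulation is a precongruence for Kleene star: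
if `P ≤ Q` then `P* ≤ Q*`. -/
theorem sim_precongruence_star {α σ₁ σ₂ : Type}
    (P : PAut α σ₁) (Q : PAut α σ₂) (h : Sim P Q) :
    Sim (pstar P) (pstar Q) := by
  obtain ⟨S, hS⟩ := h
  exact ⟨StarRel S, hS.starRel⟩

end PCKA
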